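/- Let n ≥ 2 and let f : Γ₊ → ℝ be smooth, symmetric, strictly positive, strictly increasing in each argument, positively homogeneous of degree one, normalized so that f(1, …, 1) = n, and inverse concave. Then for every κ ∈ Γ₊, Σ_{k=1}^n ḟ^k(κ) κ_k² ≥ f(κ)²/n. -/

import Mathlib

open Filter Topology Matrix

noncomputable section

/-- The open positive cone Γ₊ ⊂ ℝⁿ. -/
def posCone (n : ℕ) : Set (Fin n → ℝ) := {x | ∀ i, 0 < x i}

/-- The dual function f_*(x) = f(x₁⁻¹,…,xₙ⁻¹)⁻¹. -/
def dualF (n : ℕ) (f : (Fin n → ℝ) → ℝ) : (Fin n → ℝ) → ℝ :=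
  fun x => (f fun i => (x i)⁻¹)⁻¹

/-- First partial derivative ḟ^i(x) = ∂f/∂x_i(x). -/
def D1 (n : ℕ) (f : (Fin n → ℝ) → ℝ) (x : Fin n → ℝ) (i : Fin n) : ℝ :=
  fderiv ℝ f x (Pi.single i 1)

/-- Second partial derivative f̈^{ij}(x) = ∂²f/∂x_i∂x_j(x). -/
def D2 (n : ℕ) (f : (Fin n → ℝ) → ℝ) (x : Fin n → ℝ) (i j : Fin n) : ℝ :=
  fderiv ℝ (fun y => fderiv ℝ f y (Pi.single i 1)) x (Pi.single j 1)

/-!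
A concave function `g` that is positively homogeneous of degree one satisfies
`g x + t * g y ≤ g (x + t • y)`, so its derivative at any point `x` in any direction `y` is at
least `g y`. For the dual function `g = f_*` at `x = κ⁻¹` the derivative in the direction `y` is
`f(κ)⁻² ∑ₖ ḟᵏ(κ) κₖ² yₖ`, and the direction `y = (1, …, 1)`, where `f_*` equals `1 / n`, gives the
theorem.
-/

section Homogeneous

variable {𝕜 E : Type*}

/-- Positive homogeneity of degree one of `g` at the points of `s`. The set `s` need not be a
cone: the dilates `k • x` may lie outside `s`. -/
def PosHomogeneousOn [Mul 𝕜] [Zero 𝕜] [LT 𝕜] [SMul 𝕜 E] (s : Set E) (g : E → 𝕜) : Prop :=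
  ∀ k : 𝕜, 0 < k → ∀ x ∈ s, g (k • x) = k * g x

theorem PosHomogeneousOn.mul_add_mul_le_map_of_concaveOn [Field 𝕜] [LinearOrder 𝕜]
    [IsStrictOrderedRing 𝕜] [AddCommMonoid E] [Module 𝕜 E] {s : Set E} {g : E → 𝕜}
    (hhom : PosHomogeneousOn s g) (hconc : ConcaveOn 𝕜 s g) {x y : E} (hx : x ∈ s) (hy : y ∈ s)
    {a b : 𝕜} (ha : 0 < a) (hb : 0 < b) :
    a * g x + b * g y ≤ g (a • x + b • y) := by
  have hab : 0 < a + b := add_pos ha hb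
  have ha' : 0 ≤ a / (a + b) := (div_pos ha hab).le
  have hb' : 0 ≤ b / (a + b) := (div_pos hb hab).le
  have hsum : a / (a + b) + b / (a + b) = 1 := by rw [← add_div, div_self hab.ne']
  calc a * g x + b * g y
      = (a + b) * (a / (a + b) * g x + b / (a + b) * g y) := by field_simp
    _ ≤ (a + b) * g ((a / (a + b)) • x + (b / (a + b)) • y) :=
        mul_le_mul_of_nonneg_left (hconc.2 hx hy ha' hb' hsum) hab.le
    _ = g ((a + b) • ((a / (a + b)) • x + (b / (a + b)) • y)) :=
        (hhom _ hab _ (hconc.1 hx hy ha' hb' hsum)).symm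
    _ = g (a • x + b • y) := by
        simp only [smul_add, smul_smul, mul_div_cancel₀ _ hab.ne']

theorem PosHomogeneousOn.le_of_hasLineDerivAt_of_concaveOn [AddCommGroup E] [Module ℝ E]
    {s : Set E} {g : E → ℝ} (hhom : PosHomogeneousOn s g) (hconc : ConcaveOn ℝ s g) {x y : E}
    (hx : x ∈ s) (hy : y ∈ s) {g' : ℝ} (hg' : HasLineDerivAt ℝ g g' x y) :
    g y ≤ g' := by
  refine ge_of_tendsto hg'.tendsto_slope_zero_right ?_
  filter_upwards [self_mem_nhdsWithin] with t (ht : 0 < t)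
  have hsuper : g x + t * g y ≤ g (x + t • y) := by
    simpa only [one_mul, one_smul] using
      hhom.mul_add_mul_le_map_of_concaveOn hconc hx hy one_pos ht
  rw [smul_eq_mul, inv_mul_eq_div, le_div_iff₀ ht]
  linarith

end Homogeneous

theorem hasLineDerivAt_pi_inv {𝕜 ι : Type*} [NontriviallyNormedField 𝕜] [Fintype ι] {x : ι → 𝕜}
    (hx : ∀ i, x i ≠ 0) (v : ι → 𝕜) :
    HasLineDerivAt 𝕜 (fun y : ι → 𝕜 => y⁻¹) (fun i => -v i / x i ^ 2) x v := by
  refine hasDerivAt_pi.2 fun i => ?_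
  have hline : HasDerivAt (fun t : 𝕜 => x i + t * v i) (v i) 0 := by
    simpa using ((hasDerivAt_id (0 : 𝕜)).mul_const (v i)).const_add (x i)
  simpa using hline.fun_inv (by simpa using hx i)

section PosCone

variable {n : ℕ} {f : (Fin n → ℝ) → ℝ}

theorem isOpen_posCone : IsOpen (posCone n) := by
  have hpi : posCone n = Set.univ.pi fun _ => Set.Ioi 0 := by ext; simp [posCone]
  rw [hpi]
  exact isOpen_set_pi Set.finite_univ fun _ _ => isOpen_Ioi

theorem inv_mem_posCone {x : Fin n → ℝ} (hx : x ∈ posCone n) : x⁻¹ ∈ posCone n :=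
  fun i => inv_pos.2 (hx i)

theorem fderiv_apply_eq_sum_D1 (x v : Fin n → ℝ) :
    fderiv ℝ f x v = ∑ i, D1 n f x i * v i := by
  conv_lhs => rw [pi_eq_sum_univ' v, map_sum]
  simp only [D1, map_smul, smul_eq_mul, mul_comm]

theorem dualF_apply (x : Fin n → ℝ) : dualF n f x = (f x⁻¹)⁻¹ := rfl

theorem PosHomogeneousOn.dualF (hhom : PosHomogeneousOn (posCone n) f) :
    PosHomogeneousOn (posCone n) (dualF n f) := by
  intro k hk x hx
  have hinv : (k • x)⁻¹ = k⁻¹ • x⁻¹ := by ext i; simp [mul_comm]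
  rw [dualF_apply, hinv, hhom _ (inv_pos.2 hk) _ (inv_mem_posCone hx), mul_inv, inv_inv,
    dualF_apply]

theorem hasLineDerivAt_dualF {x : Fin n → ℝ} (hx : ∀ i, x i ≠ 0)
    (hf : DifferentiableAt ℝ f x⁻¹) (hfx : f x⁻¹ ≠ 0) (v : Fin n → ℝ) :
    HasLineDerivAt ℝ (dualF n f) ((∑ i, D1 n f x⁻¹ i * x⁻¹ i ^ 2 * v i) / f x⁻¹ ^ 2) x v := by
  have hcomp : HasDerivAt (fun t : ℝ => f (x + t • v)⁻¹)
      (fderiv ℝ f x⁻¹ fun i => -v i / x i ^ 2) 0 :=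
    hf.hasFDerivAt.comp_hasDerivAt_of_eq 0 (hasLineDerivAt_pi_inv hx v) (by simp)
  have hderiv : (fderiv ℝ f x⁻¹ fun i => -v i / x i ^ 2) =
      -∑ i, D1 n f x⁻¹ i * x⁻¹ i ^ 2 * v i := by
    rw [fderiv_apply_eq_sum_D1, ← Finset.sum_neg_distrib]
    refine Finset.sum_congr rfl fun i _ => ?_
    rw [Pi.inv_apply]
    ring
  rw [hderiv] at hcomp
  simpa [HasLineDerivAt, dualF_apply] using hcomp.fun_inv (by simpa using hfx)

end PosCone

theorem inverse_concave_second_moment_general {n : ℕ} {f : (Fin n → ℝ) → ℝ}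
    (hpos : ∀ x ∈ posCone n, 0 < f x) (hhom : PosHomogeneousOn (posCone n) f)
    (hinvconc : ConcaveOn ℝ (posCone n) (dualF n f)) {κ y : Fin n → ℝ} (hκ : κ ∈ posCone n)
    (hy : y ∈ posCone n) (hf : DifferentiableAt ℝ f κ) :
    f κ ^ 2 * dualF n f y ≤ ∑ k, D1 n f κ k * κ k ^ 2 * y k := by
  have hfκ : 0 < f κ := hpos κ hκ
  have hderiv : HasLineDerivAt ℝ (dualF n f)
      ((∑ k, D1 n f κ k * κ k ^ 2 * y k) / f κ ^ 2) κ⁻¹ y := by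
    simpa only [inv_inv] using hasLineDerivAt_dualF (f := f)
      (fun i => (inv_mem_posCone hκ i).ne') (by rwa [inv_inv]) (by rw [inv_inv]; exact hfκ.ne') y
  have hle : dualF n f y ≤ (∑ k, D1 n f κ k * κ k ^ 2 * y k) / f κ ^ 2 :=
    hhom.dualF.le_of_hasLineDerivAt_of_concaveOn hinvconc (inv_mem_posCone hκ) hy hderiv
  rwa [le_div_iff₀' (pow_pos hfκ 2)] at hle

/-- if `f` is inverse concave and normalized by `f(1,…,1) = n`, then
`Σ_k ḟ^k(κ) κ_k² ≥ f(κ)²/n` for every `κ ∈ Γ₊`. -/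
theorem inverse_concave_second_moment (n : ℕ) (hn : 2 ≤ n) (f : (Fin n → ℝ) → ℝ)
    (hsmooth : ContDiffOn ℝ (⊤ : ℕ∞) f (posCone n))
    (hsym : ∀ σ : Equiv.Perm (Fin n), ∀ x ∈ posCone n, f (x ∘ σ) = f x)
    (hpos : ∀ x ∈ posCone n, 0 < f x)
    (hmono : ∀ x ∈ posCone n, ∀ i, 0 < D1 n f x i)
    (hhom : ∀ k : ℝ, 0 < k → ∀ x ∈ posCone n, f (k • x) = k * f x)
    (hnorm : f (fun _ => 1) = n)
    (hinvconc : ConcaveOn ℝ (posCone n) (dualF n f)) :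
    ∀ κ ∈ posCone n, f κ ^ 2 / n ≤ ∑ k, D1 n f κ k * κ k ^ 2 := by
  intro κ hκ
  have hf : DifferentiableAt ℝ f κ :=
    (hsmooth.contDiffAt (isOpen_posCone.mem_nhds hκ)).differentiableAt (by simp)
  simpa [dualF, hnorm, div_eq_mul_inv] using inverse_concave_second_moment_general
    hpos hhom hinvconc hκ (y := fun _ => 1) (fun _ => one_pos) hf
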